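/- For every x ∈ {0,…,2^n−1} and every i ∈ {1,…,n}, the edge travel(i) is not an improving switch for the canonical policy π_x. -/

import Mathlib

/-! ## The Markov decision process `𝔅_n` -/

/-- Vertices of the MDP `𝔅_n`: a transportation vertex `t`, a sink `s`, a dummy vertex `d`,
and vertices `a i`, `b i` for `i ∈ {1,…,n}`. -/
inductive BV : Type where
  | t : BV
  | s : BV
  | d : BV
  | a : ℕ → BV
  | b : ℕ → BV
deriving DecidableEq

/-- The vertex `a i` for `i ∈ {1,…,n+1}`, with the convention `a (n+1) = s`. -/
def aN (n i : ℕ) : BV := if i = n + 1 then BV.s else BV.a i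

/-- The vertex `b i` for `i ∈ {1,…,n+1}`, with the convention `b (n+1) = d`. -/
def bN (n i : ℕ) : BV := if i = n + 1 then BV.d else BV.b i

/-- The vertex set of `𝔅_n`. -/
def IsBVertex (n : ℕ) : BV → Prop
  | BV.t => True
  | BV.s => True
  | BV.d => True
  | BV.a i => 1 ≤ i ∧ i ≤ n
  | BV.b i => 1 ≤ i ∧ i ≤ n

/-- The edge relation of `𝔅_n`: travel, enter, skip, board, stay, leave edges,
the edge `(d,s)` and the self-loop `(s,s)`. -/
def BEdge (n : ℕ) (u v : BV) : Prop :=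
  (∃ i, 1 ≤ i ∧ i ≤ n ∧ u = BV.t ∧ v = BV.a i) ∨
  (∃ i, 1 ≤ i ∧ i ≤ n ∧ u = BV.a i ∧ v = BV.b i) ∨
  (∃ i, 1 ≤ i ∧ i ≤ n ∧ u = BV.a i ∧ v = aN n (i + 1)) ∨
  (∃ i, 1 ≤ i ∧ i ≤ n ∧ u = BV.a i ∧ v = BV.t) ∨
  (∃ i, 1 ≤ i ∧ i ≤ n ∧ u = BV.b i ∧ v = bN n (i + 1)) ∨
  (∃ i, 1 ≤ i ∧ i ≤ n ∧ u = BV.b i ∧ v = aN n (i + 1)) ∨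
  (u = BV.d ∧ v = BV.s) ∨ (u = BV.s ∧ v = BV.s)

/-- The reward function of `𝔅_n`: `r(enter i) = 2^i`, `r(stay i) = 3/4`,
`r(board i) = -2^i + 5/4`, and reward `0` on all other edges. -/
def rB (n : ℕ) (u v : BV) : ℚ :=
  match u, v with
  | BV.a i, BV.b j => if i = j then 2 ^ i else 0
  | BV.a i, BV.t => -(2 ^ i) + 5 / 4
  | BV.b i, BV.b j => if j = i + 1 then 3 / 4 else 0
  | BV.b i, BV.d => if i = n then 3 / 4 else 0
  | _, _ => 0

/-- A policy for `𝔅_n` chooses an outgoing edge at every vertex. -/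
def IsBPolicy (n : ℕ) (π : BV → BV) : Prop := ∀ u, IsBVertex n u → BEdge n u (π u)

/-- A policy is weak unichain if it reaches the sink `s` from every vertex. -/
def BWeakUnichain (n : ℕ) (π : BV → BV) : Prop :=
  ∀ u, IsBVertex n u → ∃ k, π^[k] u = BV.s

open Classical in
/-- The value of a vertex `v` w.r.t. a (weak unichain) policy `π`:
the sum of the rewards along the path that `π` takes from `v` to the sink `s`. -/
noncomputable def BVal (n : ℕ) (π : BV → BV) (v : BV) : ℚ :=
  if h : ∃ k, π^[k] v = BV.s then
    ∑ i ∈ Finset.range (Nat.find h), rB n (π^[i] v) (π^[i + 1] v)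
  else 0

/-- The reduced costs of the edge `(u,v)` w.r.t. the policy `π`. -/
noncomputable def zB (n : ℕ) (π : BV → BV) (u v : BV) : ℚ :=
  rB n u v + BVal n π v - BVal n π u

/-- The edge `(u,v)` is an improving switch for `π` if its reduced costs are positive. -/
def BImproving (n : ℕ) (π : BV → BV) (u v : BV) : Prop :=
  BEdge n u v ∧ 0 < zB n π u v

/-- The Bland numbering `𝒩_{𝔅_n}` of the edges of `𝔅_n`. -/
def NB (n : ℕ) (u v : BV) : ℕ :=
  match u, v with
  | BV.t, BV.a i => i
  | BV.a i, BV.b _ => n + 1 + 5 * (i - 1)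
  | BV.a i, BV.a _ => n + 2 + 5 * (i - 1)
  | BV.a i, BV.s => n + 2 + 5 * (i - 1)
  | BV.a i, BV.t => n + 3 + 5 * (i - 1)
  | BV.b i, BV.b _ => n + 4 + 5 * (i - 1)
  | BV.b i, BV.d => n + 4 + 5 * (i - 1)
  | BV.b i, BV.a _ => n + 5 + 5 * (i - 1)
  | BV.b i, BV.s => n + 5 + 5 * (i - 1)
  | BV.d, BV.s => 6 * n + 1
  | BV.s, BV.s => 6 * n + 2
  | _, _ => 0

/-- One step of Bland's policy iteration with edge numbering `N`:
apply the improving switch with the smallest number. -/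
def IsBlandStep (n : ℕ) (N : BV → BV → ℕ) (π π' : BV → BV) : Prop :=
  ∃ u v, BImproving n π u v ∧ (∀ u' v', BImproving n π u' v' → N u v ≤ N u' v') ∧
    π' = Function.update π u v

/-- `BlandReaches n N π ψ` says that Bland's policy iteration started at `π` visits `ψ`. -/
def BlandReaches (n : ℕ) (N : BV → BV → ℕ) : (BV → BV) → (BV → BV) → Prop :=
  Relation.ReflTransGen (IsBlandStep n N)

/-- The canonical policy `π_0` for `0`: `travel 1`, `skip i` and `leave i` are active. -/
def pi0 (n : ℕ) : BV → BV := fun u =>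
  match u with
  | BV.t => BV.a 1
  | BV.a i => aN n (i + 1)
  | BV.b i => aN n (i + 1)
  | BV.d => BV.s
  | BV.s => BV.s

/-- The optimal policy `π_*`: `travel 1`, `enter i` for all `i`, `leave j` for `j < n`,
and `stay n` are active. -/
def piStar (n : ℕ) : BV → BV := fun u =>
  match u with
  | BV.t => BV.a 1
  | BV.a i => BV.b i
  | BV.b i => if i = n then BV.d else BV.a (i + 1)
  | BV.d => BV.s
  | BV.s => BV.s

/-! ## Bits and canonical policies -/

/-- The least significant set bit `ℓ_1(x)` (1-based). -/
noncomputable def lsb (x : ℕ) : ℕ := sInf {i | 1 ≤ i ∧ Nat.testBit x (i - 1)}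

/-- The most significant set bit `m(x)` (1-based). -/
noncomputable def msb1 (x : ℕ) : ℕ := sSup {i | 1 ≤ i ∧ Nat.testBit x (i - 1)}

/-- The least unset bit `ℓ_0(x)` (1-based). -/
noncomputable def lzero (x : ℕ) : ℕ := sInf {i | 1 ≤ i ∧ ¬ Nat.testBit x (i - 1)}

/-- `L_i(x) = max { j ≤ i-2 | x_j = 1 or j = 1 }` (1-based bits). -/
noncomputable def Lfun (i x : ℕ) : ℕ :=
  sSup {j | 1 ≤ j ∧ j ≤ i - 2 ∧ (Nat.testBit x (j - 1) ∨ j = 1)}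

/-- `IsCanonical n x π` says that `π` is the canonical policy `π_x` for `x`. -/
noncomputable def IsCanonical (n x : ℕ) (π : BV → BV) : Prop :=
  IsBPolicy n π ∧
  if x = 0 then
    π BV.t = BV.a 1 ∧
      ∀ i, 1 ≤ i → i ≤ n → π (BV.a i) = aN n (i + 1) ∧ π (BV.b i) = aN n (i + 1)
  else
    π BV.t = BV.a (lsb x) ∧
    π (BV.b (msb1 x)) = aN n (msb1 x + 1) ∧
    (∀ i, msb1 x < i → i ≤ n → π (BV.a i) = aN n (i + 1) ∧ π (BV.b i) = aN n (i + 1)) ∧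
    ∀ i, 1 ≤ i → i ≤ n → Nat.testBit x (i - 1) →
      π (BV.a i) = BV.b i ∧
      (i = 2 → π (BV.b 1) = BV.a 2 ∧ (¬ Nat.testBit x 0 → π (BV.a 1) = BV.a 2)) ∧
      (3 ≤ i → Nat.testBit x (i - 2) → π (BV.b (i - 1)) = BV.a i) ∧
      (3 ≤ i → ¬ Nat.testBit x (i - 2) →
        π (BV.b (i - 1)) = BV.b i ∧ π (BV.a (i - 1)) = BV.a i ∧
        π (BV.b (i - 2)) = BV.a (i - 1) ∧
        (Lfun i x < i - 2 →
          ∀ j, Lfun i x + 1 ≤ j → j ≤ i - 2 →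
            π (BV.a j) = BV.t ∧ π (BV.b (j - 1)) = BV.b j) ∧
        (Lfun i x = 1 → ¬ Nat.testBit x 0 → π (BV.a 1) = BV.t))

/-- Activating a list of edges in a policy, from left to right. -/
def activateList (π : BV → BV) (L : List (BV × BV)) : BV → BV :=
  L.foldl (fun σ e => Function.update σ e.1 e.2) π

/-- The canonical phases w.r.t. an odd number `x` (with `ℓ := ℓ_0(x)`), as a list of edges
to be activated in order. -/
noncomputable def phaseList (n x : ℕ) : List (BV × BV) :=
  let ℓ := lzero x
  (if Nat.testBit x ℓ then [(BV.b ℓ, aN n (ℓ + 1))] else []) ++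
  (if Nat.testBit x ℓ ∨ msb1 x < ℓ then [(BV.b (ℓ - 1), BV.b ℓ)] else []) ++
  [(BV.a ℓ, BV.b ℓ), (BV.t, BV.a ℓ)] ++
  ((List.range (ℓ - 2)).map fun j => (BV.a (j + 1), BV.t)) ++
  [(BV.a (ℓ - 1), BV.a ℓ)] ++
  (((List.range (ℓ - 3)).reverse).map fun j => (BV.b (j + 1), BV.b (j + 2))) ++
  (if ℓ = 2 then [(BV.b 1, BV.a 2)] else [])

/-! ## The Markov decision process `𝔇_n` -/

/-- Vertices of `𝔇_n`: the original vertices (`base`), and for every edge `(v,w)` of `𝔅_n`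
other than the self-loop, the gadget vertices `x v w`, `y v w`, `z v w`. -/
inductive DV : Type where
  | base : BV → DV
  | x : BV → BV → DV
  | y : BV → BV → DV
  | z : BV → BV → DV
deriving DecidableEq

/-- The edges of `𝔅_n` that get replaced by gadgets (all edges except the self-loop `(s,s)`). -/
def DEdgePair (n : ℕ) (v w : BV) : Prop := BEdge n v w ∧ v ≠ BV.s

/-- The vertex set of `𝔇_n`. -/
def IsDVertex (n : ℕ) : DV → Prop
  | DV.base v => IsBVertex n v
  | DV.x v w => DEdgePair n v w
  | DV.y v w => DEdgePair n v w
  | DV.z v w => DEdgePair n v w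

/-- The agent vertices of `𝔇_n` (all vertices except the randomization vertices `y v w`). -/
def IsDAgent (n : ℕ) : DV → Prop
  | DV.base v => IsBVertex n v
  | DV.x v w => DEdgePair n v w
  | DV.y _ _ => False
  | DV.z v w => DEdgePair n v w

/-- The agent edges of `𝔇_n`. -/
def DEdge (n : ℕ) (u u' : DV) : Prop :=
  (∃ v w, DEdgePair n v w ∧
    ((u = DV.base v ∧ u' = DV.x v w) ∨ (u = DV.x v w ∧ u' = DV.base v) ∨
     (u = DV.x v w ∧ u' = DV.y v w) ∨ (u = DV.z v w ∧ u' = DV.base w))) ∨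
  (u = DV.base BV.s ∧ u' = DV.base BV.s)

/-- The reward function of `𝔇_n`: the edge `(z v w, w)` carries the reward of the original
edge `(v,w)`; all other agent edges have reward `0`. -/
def rD (n : ℕ) (u u' : DV) : ℚ :=
  match u, u' with
  | DV.z v w, DV.base w' => if w' = w then rB n v w else 0
  | _, _ => 0

/-- A policy for `𝔇_n` chooses an outgoing agent edge at every agent vertex. -/
def IsDPolicy (n : ℕ) (π : DV → DV) : Prop := ∀ u, IsDAgent n u → DEdge n u (π u)

/-- `IsDVal n p π V` says that `V` satisfies the Bellman equations characterizing the value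
function of the policy `π` for `𝔇_n` with probabilities `p`, with `V s = 0`. -/
def IsDVal (n : ℕ) (p : BV → ℚ) (π : DV → DV) (V : DV → ℚ) : Prop :=
  V (DV.base BV.s) = 0 ∧
  (∀ u, IsDAgent n u → V u = rD n u (π u) + V (π u)) ∧
  (∀ v w, DEdgePair n v w →
    V (DV.y v w) = p v * V (DV.z v w) + (1 - p v) * V (DV.base v))

open Classical in
/-- The value function of a (weak unichain) policy `π` for `𝔇_n`: the unique solution of the
Bellman equations (normalized to `0` outside the vertex set). -/
noncomputable def DVal (n : ℕ) (p : BV → ℚ) (π : DV → DV) : DV → ℚ :=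
  if h : ∃! V : DV → ℚ, IsDVal n p π V ∧ ∀ u, ¬ IsDVertex n u → V u = 0 then
    h.exists.choose
  else fun _ => 0

/-- The reduced costs of an agent edge `(u,u')` of `𝔇_n` w.r.t. the policy `π`. -/
noncomputable def zD (n : ℕ) (p : BV → ℚ) (π : DV → DV) (u u' : DV) : ℚ :=
  rD n u u' + DVal n p π u' - DVal n p π u

/-- An agent edge of `𝔇_n` is an improving switch if its reduced costs are positive. -/
def DImproving (n : ℕ) (p : BV → ℚ) (π : DV → DV) (u u' : DV) : Prop :=
  DEdge n u u' ∧ 0 < zD n p π u u'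

/-- One (agent or positive-probability randomization) step of the process `𝔇_n` under `π`. -/
def DStep (n : ℕ) (p : BV → ℚ) (π : DV → DV) (u u' : DV) : Prop :=
  (IsDAgent n u ∧ u' = π u) ∨
  (∃ v w, DEdgePair n v w ∧ u = DV.y v w ∧
    ((u' = DV.z v w ∧ 0 < p v) ∨ (u' = DV.base v ∧ 0 < 1 - p v)))

/-- A policy for `𝔇_n` is weak unichain if it reaches `s` with probability one from every
vertex, i.e. `s` is reachable via active/positive-probability steps from every vertex. -/
def DWeakUnichain (n : ℕ) (p : BV → ℚ) (π : DV → DV) : Prop :=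
  ∀ u, IsDVertex n u → Relation.ReflTransGen (DStep n p π) u (DV.base BV.s)

/-- The twin policy of a policy `π` for `𝔅_n`: every vertex `v ≠ s` is `π v`-oriented. -/
def twin (π : BV → BV) : DV → DV := fun u =>
  match u with
  | DV.base v => if v = BV.s then DV.base BV.s else DV.x v (π v)
  | DV.x v w => if w = π v then DV.y v w else DV.base v
  | DV.y v w => DV.y v w
  | DV.z _ w => DV.base w

/-- The vertex numbering `𝒩_V` of `𝔅_n`: the order `(t, a 1, b 1, a 2, b 2, …, a n, b n, d, s)`. -/
def NV (n : ℕ) : BV → ℕ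
  | BV.t => 1
  | BV.a i => 2 * i
  | BV.b i => 2 * i + 1
  | BV.d => 2 * n + 2
  | BV.s => 2 * n + 3

/-- The specific probabilities `p_v = 2^{-𝒩_V(v)·(n+5)}`. -/
noncomputable def pSpec (n : ℕ) (v : BV) : ℚ := (2 : ℚ) ^ (-((NV n v * (n + 5) : ℕ) : ℤ))

/-- The set `B(v)` of agent edges of `𝔇_n` belonging to the vertex `v`. -/
def Belongs (n : ℕ) (v : BV) (e : DV × DV) : Prop :=
  ∃ w, DEdgePair n v w ∧
    (e = (DV.x v w, DV.y v w) ∨ e = (DV.base v, DV.x v w) ∨ e = (DV.x v w, DV.base v))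

/-- Applying the improving switch `e` to the policy `π` yields `π'`. -/
def DApply (n : ℕ) (p : BV → ℚ) (π : DV → DV) (e : DV × DV) (π' : DV → DV) : Prop :=
  DImproving n p π e.1 e.2 ∧ π' = Function.update π e.1 e.2

/-- One step of Bland's policy iteration on `𝔇_n` with edge numbering `N`. -/
def IsBlandStepD (n : ℕ) (p : BV → ℚ) (N : DV → DV → ℕ) (π π' : DV → DV) : Prop :=
  ∃ u u', DImproving n p π u u' ∧ (∀ a b, DImproving n p π a b → N u u' ≤ N a b) ∧
    π' = Function.update π u u'

/-- One step of Dantzig's policy iteration on `𝔇_n`: apply an improving switch of maximal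
reduced costs. -/
def DantzigStep (n : ℕ) (p : BV → ℚ) (π π' : DV → DV) : Prop :=
  ∃ u u', DImproving n p π u u' ∧
    (∀ a b, DImproving n p π a b → zD n p π a b ≤ zD n p π u u') ∧
    π' = Function.update π u u'

/-- The finite set of vertices of `𝔅_n`, as a `Finset`. -/
noncomputable def BVSet (n : ℕ) : Finset BV :=
  {BV.t, BV.d, BV.s} ∪ (Finset.Icc 1 n).image BV.a ∪ (Finset.Icc 1 n).image BV.b

/-- The finite set of agent vertices of `𝔇_n`, as a `Finset`. -/
noncomputable def DAgentSet (n : ℕ) : Finset DV := by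
  classical
  exact ((BVSet n).image DV.base) ∪
    (((BVSet n ×ˢ BVSet n).filter fun e => DEdgePair n e.1 e.2).image fun e => DV.x e.1 e.2) ∪
    (((BVSet n ×ˢ BVSet n).filter fun e => DEdgePair n e.1 e.2).image fun e => DV.z e.1 e.2)

/-- The objective of the Largest Increase rule: the sum of the values of all agent vertices. -/
noncomputable def LIobj (n : ℕ) (p : BV → ℚ) (π : DV → DV) : ℚ :=
  ∑ u ∈ DAgentSet n, DVal n p π u

/-- One step of the Largest Increase policy iteration on `𝔇_n`: apply an improving switch
maximizing the sum of all agent vertex values of the resulting policy. -/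
def LIStep (n : ℕ) (p : BV → ℚ) (π π' : DV → DV) : Prop :=
  ∃ u u', DImproving n p π u u' ∧
    (∀ a b, DImproving n p π a b →
      LIobj n p (Function.update π a b) ≤ LIobj n p (Function.update π u u')) ∧
    π' = Function.update π u u'

/-- `N` is a Bland numbering `𝒩_{𝔇_n}` for `𝔇_n`: it is injective on agent edges, the edges
`(x v w, v)` all come first, within each gadget `(x v w, y v w)` precedes `(v, x v w)`,
the gadget blocks are ordered according to `𝒩_{𝔅_n}`, and the self-loop comes last. -/
def IsDBlandNumbering (n : ℕ) (N : DV → DV → ℕ) : Prop :=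
  (∀ u₁ u₂ u₁' u₂', DEdge n u₁ u₂ → DEdge n u₁' u₂' → N u₁ u₂ = N u₁' u₂' →
    u₁ = u₁' ∧ u₂ = u₂') ∧
  (∀ v w v' w', DEdgePair n v w → DEdgePair n v' w' →
    N (DV.x v w) (DV.base v) < N (DV.x v' w') (DV.y v' w')) ∧
  (∀ v w, DEdgePair n v w → N (DV.x v w) (DV.y v w) < N (DV.base v) (DV.x v w)) ∧
  (∀ v w v' w', DEdgePair n v w → DEdgePair n v' w' → NB n v w < NB n v' w' →
    N (DV.base v) (DV.x v w) < N (DV.x v' w') (DV.y v' w')) ∧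
  (∀ v w, DEdgePair n v w → N (DV.base v) (DV.x v w) < N (DV.base BV.s) (DV.base BV.s))
/-- `π` reaches the sink from `v`, collecting total reward `q`. -/
def HV (n : ℕ) (π : BV → BV) (v : BV) (q : ℚ) : Prop :=
  (∃ k, π^[k] v = BV.s) ∧ BVal n π v = q

theorem HV_s (n : ℕ) (π : BV → BV) : HV n π BV.s 0 := by
  classical
  have h : ∃ k, π^[k] BV.s = BV.s := ⟨0, rfl⟩
  refine ⟨h, ?_⟩
  unfold BVal
  rw [dif_pos h]
  have h0 : Nat.find h = 0 := by rw [Nat.find_eq_zero]; rfl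
  simp [h0]

theorem HV_step (n : ℕ) (π : BV → BV) (u w : BV) (q : ℚ) (hu : u ≠ BV.s) (hw : π u = w)
    (h : HV n π w q) : HV n π u (rB n u w + q) := by
  classical
  subst hw
  obtain ⟨h1, h2⟩ := h
  have h' : ∃ k, π^[k] u = BV.s := by
    obtain ⟨k, hk⟩ := h1
    exact ⟨k + 1, by simpa [Function.iterate_succ_apply] using hk⟩
  refine ⟨h', ?_⟩
  unfold BVal at h2 ⊢
  rw [dif_pos h1] at h2
  rw [dif_pos h']
  have hf : Nat.find h' = Nat.find h1 + 1 := by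
    rw [Nat.find_eq_iff]
    constructor
    · have := Nat.find_spec h1
      simpa [Function.iterate_succ_apply] using this
    · intro m hm
      cases m with
      | zero => simpa using hu
      | succ m =>
        have := Nat.find_min h1 (m := m) (by omega)
        simpa [Function.iterate_succ_apply] using this
  have e : Nat.find h' = Nat.find h1 + 1 := hf
  rw [← h2]
  convert Finset.sum_range_succ' (fun i => rB n (π^[i] u) (π^[i + 1] u)) (Nat.find h1) using 1
  · exact congrArg (fun m => ∑ i ∈ Finset.range m, rB n (π^[i] u) (π^[i + 1] u)) e
  · rw [add_comm]
    simp [Function.iterate_succ_apply]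

theorem HV_step0 (n : ℕ) (π : BV → BV) (u w : BV) (q : ℚ) (hu : u ≠ BV.s) (hw : π u = w)
    (hr : rB n u w = 0) (h : HV n π w q) : HV n π u q := by
  have := HV_step n π u w q hu hw h
  rwa [hr, zero_add] at this

theorem rB_a_aN (n i j : ℕ) : rB n (BV.a i) (aN n j) = 0 := by
  unfold aN; split <;> rfl

theorem rB_b_aN (n i j : ℕ) : rB n (BV.b i) (aN n j) = 0 := by
  unfold aN; split <;> rfl

/-- above the most significant bit, all values vanish -/
theorem HV_top (n m : ℕ) (π : BV → BV)
    (h : ∀ i, m < i → i ≤ n → π (BV.a i) = aN n (i + 1)) (k : ℕ) :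
    ∀ j, j + k = n + 1 → m < j → HV n π (aN n j) 0 := by
  induction k with
  | zero =>
    intro j hj _
    have : aN n j = BV.s := by simp [aN]; omega
    rw [this]; exact HV_s n π
  | succ k ih =>
    intro j hj hm
    have : aN n j = BV.a j := by unfold aN; rw [if_neg (by omega)]
    rw [this]
    exact HV_step0 n π _ _ 0 (by simp) (h j hm (by omega)) (rB_a_aN _ _ _)
      (ih (j + 1) (by omega) (by omega))

/-- a chain of `stay` edges from `b i` to `b e` -/
theorem HV_chain (n : ℕ) (π : BV → BV) (i e : ℕ) (q : ℚ) (he : HV n π (BV.b e) q)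
    (h : ∀ j, i ≤ j → j < e → π (BV.b j) = BV.b (j + 1)) (k : ℕ) :
    ∀ j, j + k = e → i ≤ j → ∃ q', q ≤ q' ∧ HV n π (BV.b j) q' := by
  induction k with
  | zero => intro j hj _; obtain rfl : j = e := by omega
            exact ⟨q, le_rfl, he⟩
  | succ k ih =>
    intro j hj hij
    obtain ⟨q', h1, h2⟩ := ih (j + 1) (by omega) (by omega)
    refine ⟨_, ?_, HV_step n π _ _ q' (by simp) (h j hij (by omega)) h2⟩
    simp [rB]; linarith

/-- next set bit after `i`, if any -/
theorem next_bit (x i : ℕ) (h : ∃ k, i < k ∧ Nat.testBit x (k - 1)) :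
    ∃ k, i < k ∧ Nat.testBit x (k - 1) ∧ ∀ j, i < j → j < k → ¬ Nat.testBit x (j - 1) := by
  classical
  refine ⟨Nat.find h, (Nat.find_spec h).1, (Nat.find_spec h).2, ?_⟩
  intro j h1 h2 h3
  exact Nat.find_min h h2 ⟨h1, h3⟩

theorem Lfun_spec (x k : ℕ) (hk : 3 ≤ k) :
    (1 ≤ Lfun k x ∧ Lfun k x ≤ k - 2 ∧ (Nat.testBit x (Lfun k x - 1) ∨ Lfun k x = 1)) ∧
    ∀ j, 1 ≤ j → j ≤ k - 2 → Nat.testBit x (j - 1) → j ≤ Lfun k x := by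
  have hb : BddAbove {j | 1 ≤ j ∧ j ≤ k - 2 ∧ (Nat.testBit x (j - 1) ∨ j = 1)} :=
    ⟨k - 2, fun j hj => hj.2.1⟩
  have hne : ({j | 1 ≤ j ∧ j ≤ k - 2 ∧ (Nat.testBit x (j - 1) ∨ j = 1)} : Set ℕ).Nonempty :=
    ⟨1, le_rfl, by omega, Or.inr rfl⟩
  refine ⟨Nat.sSup_mem hne hb, ?_⟩
  intro j h1 h2 h3
  exact le_csSup hb ⟨h1, h2, Or.inl h3⟩

theorem stmt3 (n : ℕ) (hn : 1 ≤ n) (x : ℕ) (hx : x ≤ 2 ^ n - 1)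
    (i : ℕ) (hi1 : 1 ≤ i) (hin : i ≤ n)
    (π : BV → BV) (hπ : IsCanonical n x π) :
    ¬ BImproving n π BV.t (BV.a i) := by
  rintro ⟨-, hz⟩
  obtain ⟨-, hc⟩ := hπ
  have aNa : ∀ j, j ≤ n → aN n j = BV.a j := fun j hj => by
    unfold aN; rw [if_neg (by omega)]
  have hr : ∀ j, rB n BV.t (BV.a j) = 0 := fun j => rfl
  simp only [zB, hr, zero_add] at hz
  by_cases hx0 : x = 0
  · rw [if_pos hx0] at hc
    obtain ⟨ht, ha⟩ := hc
    have hv : ∀ j, 1 ≤ j → j ≤ n → HV n π (BV.a j) 0 := fun j h1 h2 => by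
      have := HV_top n 0 π (fun i h1 h2 => (ha i h1 h2).1) (n + 1 - j) j (by omega) h1
      rwa [aNa j h2] at this
    have h1 := (hv i hi1 hin).2
    have h2 := (HV_step0 n π BV.t _ 0 (by simp) ht rfl (hv 1 le_rfl hn)).2
    rw [h1, h2] at hz
    simp at hz
  rw [if_neg hx0] at hc
  obtain ⟨ht, hm, htop, hbits⟩ := hc
  have hxlt : x < 2 ^ n := by have := Nat.two_pow_pos n; omega
  have hle : ∀ j, 1 ≤ j → Nat.testBit x (j - 1) → j ≤ n := by
    intro j h1 h2
    by_contra hcon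
    have : x < 2 ^ (j - 1) := lt_of_lt_of_le hxlt (Nat.pow_le_pow_right (by norm_num) (by omega))
    rw [Nat.testBit_lt_two_pow this] at h2
    simp at h2
  have hne : ({i | 1 ≤ i ∧ Nat.testBit x (i - 1)} : Set ℕ).Nonempty := by
    obtain ⟨j, hj⟩ := Nat.exists_testBit_of_ne_zero hx0
    exact ⟨j + 1, by omega, by simpa using hj⟩
  have hbd : BddAbove ({i | 1 ≤ i ∧ Nat.testBit x (i - 1)} : Set ℕ) :=
    ⟨n, fun j hj => hle j hj.1 hj.2⟩
  have hlsb : 1 ≤ lsb x ∧ Nat.testBit x (lsb x - 1) := Nat.sInf_mem hne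
  have hlsb' : ∀ j, 1 ≤ j → Nat.testBit x (j - 1) → lsb x ≤ j := fun j h1 h2 =>
    Nat.sInf_le ⟨h1, h2⟩
  have hmsb : 1 ≤ msb1 x ∧ Nat.testBit x (msb1 x - 1) := Nat.sSup_mem hne hbd
  have hmsb' : ∀ j, 1 ≤ j → Nat.testBit x (j - 1) → j ≤ msb1 x := fun j h1 h2 =>
    le_csSup hbd ⟨h1, h2⟩
  generalize msb1 x = m at *
  generalize lsb x = l at *
  have hmn := hle m hmsb.1 hmsb.2
  have hv0 : ∀ j, m < j → j ≤ n + 1 → HV n π (aN n j) 0 := fun j h1 h2 =>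
    HV_top n m π (fun i h1 h2 => (htop i h1 h2).1) (n + 1 - j) j (by omega) h1
  -- main induction over set bits
  have key : ∀ k j, j + k = m → 1 ≤ j → Nat.testBit x (j - 1) →
      ∃ q, HV n π (BV.a j) q ∧ 0 ≤ q ∧
        ∀ j', j < j' → Nat.testBit x (j' - 1) → BVal n π (BV.a j') ≤ q := by
    intro k
    induction k using Nat.strong_induction_on with
    | _ k ih =>
    intro j hjk hj1 hj
    have hjn := hle j hj1 hj
    have henter := (hbits j hj1 hjn hj).1
    have hrE : rB n (BV.a j) (BV.b j) = 2 ^ j := by simp [rB]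
    have hpow : (0 : ℚ) < 2 ^ j := by positivity
    rcases Nat.eq_or_lt_of_le (hmsb' j hj1 hj) with hjm | hjm
    · subst hjm
      have hb := HV_step0 n π (BV.b j) _ 0 (by simp) hm (rB_b_aN _ _ _)
        (hv0 (j + 1) (by omega) (by omega))
      have ha := HV_step n π (BV.a j) _ 0 (by simp) henter hb
      refine ⟨_, ha, by rw [hrE]; linarith, ?_⟩
      intro j' h1 h2
      have := hmsb' j' (by omega) h2
      omega
    · obtain ⟨p, hp1, hp2, hp3⟩ := next_bit x j ⟨m, hjm, hmsb.2⟩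
      have hpm := hmsb' p (by omega) hp2
      have hpn := hle p (by omega) hp2
      obtain ⟨q, hq, hq0, hqle⟩ := ih (m - p) (by omega) p (by omega) (by omega) hp2
      obtain ⟨-, hB, hC, hD⟩ := hbits p (by omega) hpn hp2
      -- value of `b j`
      have hb : ∃ q', q ≤ q' ∧ HV n π (BV.b j) q' := by
        by_cases hpj : p = j + 1
        · subst hpj
          refine ⟨q, le_rfl, ?_⟩
          have hl : π (BV.b j) = BV.a (j + 1) := by
            by_cases h2 : j = 1
            · subst h2; exact (hB rfl).1
            · exact hC (by omega) (by simpa using hj)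
          exact HV_step0 n π _ _ q (by simp) hl rfl hq
        · obtain ⟨h1, h2, h3, h4, -⟩ := hD (by omega) (hp3 (p - 1) (by omega) (by omega))
          have hL := Lfun_spec x p (by omega)
          have hLj : Lfun p x = j := by
            have h5 := hL.2 j hj1 (by omega) hj
            rcases hL.1.2.2 with h6 | h6
            · by_contra hcon
              exact hp3 _ (by omega) (by have := hL.1.2.1; omega) h6
            · omega
          rw [hLj] at h4
          have hap := HV_step0 n π (BV.a (p - 1)) _ q (by simp) h2 rfl hq
          have hbp := HV_step0 n π (BV.b (p - 2)) _ q (by simp) h3 rfl hap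
          refine HV_chain n π j (p - 2) q hbp ?_ (p - 2 - j) j (by omega) le_rfl
          intro r hr1 hr2
          have := (h4 (by omega) (r + 1) (by omega) (by omega)).2
          simpa using this
      obtain ⟨q', hqq, hb⟩ := hb
      refine ⟨_, HV_step n π (BV.a j) _ q' (by simp) henter hb, by rw [hrE]; linarith, ?_⟩
      intro j' h1 h2
      rw [hrE]
      rcases lt_trichotomy j' p with h | h | h
      · exact absurd h2 (hp3 j' h1 h)
      · subst h; rw [hq.2]; linarith
      · have := hqle j' h h2; linarith
  have hlm := hlsb' m hmsb.1 hmsb.2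
  obtain ⟨v, hv, hvn, hvle⟩ := key (m - l) l (by omega) hlsb.1 hlsb.2
  have htv : HV n π BV.t v := HV_step0 n π _ _ v (by simp) ht rfl hv
  have hset : ∀ j, 1 ≤ j → Nat.testBit x (j - 1) → BVal n π (BV.a j) ≤ v := by
    intro j h1 h2
    rcases Nat.eq_or_lt_of_le (hlsb' j h1 h2) with h | h
    · subst h; exact hv.2.le
    · exact hvle j h h2
  rw [htv.2] at hz
  have : BVal n π (BV.a i) ≤ v := by
    by_cases hib : Nat.testBit x (i - 1)
    · exact hset i hi1 hib
    by_cases him : m < i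
    · have := hv0 i him (by omega)
      rw [aNa i hin] at this
      rw [this.2]; exact hvn
    have him' : i < m := by
      rcases Nat.eq_or_lt_of_le (not_lt.mp him) with h | h
      · subst h; exact absurd hmsb.2 hib
      · exact h
    obtain ⟨p, hp1, hp2, hp3⟩ := next_bit x i ⟨m, him', hmsb.2⟩
    have hpm := hmsb' p (by omega) hp2
    have hpn := hle p (by omega) hp2
    obtain ⟨q, hq, -, -⟩ := key (m - p) p (by omega) (by omega) hp2
    obtain ⟨-, hB, hC, hD⟩ := hbits p (by omega) hpn hp2
    by_cases hpi : p = i + 1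
    · subst hpi
      have hs : π (BV.a i) = BV.a (i + 1) := by
        by_cases h2 : i = 1
        · subst h2; exact (hB rfl).2 hib
        · exact (hD (by omega) (by simpa using hib)).2.1
      rw [(HV_step0 n π _ _ q (by simp) hs rfl hq).2, ← hq.2]
      exact hset _ (by omega) hp2
    · obtain ⟨h1, h2, h3, h4, h5⟩ := hD (by omega) (hp3 (p - 1) (by omega) (by omega))
      have hL := Lfun_spec x p (by omega)
      have hbd : π (BV.a i) = BV.t := by
        by_cases hLi : Lfun p x < i
        · exact (h4 (by omega) i (by omega) (by omega)).1
        · rcases hL.1.2.2 with h6 | h6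
          · exfalso
            rcases Nat.eq_or_lt_of_le (not_lt.mp hLi) with h | h
            · rw [← h] at h6; exact hib h6
            · exact hp3 _ h (by have := hL.1.2.1; omega) h6
          · obtain rfl : i = 1 := by omega
            exact h5 h6 hib
      rw [(HV_step n π _ _ v (by simp) hbd htv).2]
      have : (2 : ℚ) ^ 1 ≤ 2 ^ i := pow_le_pow_right₀ (by norm_num) hi1
      simp only [rB]
      linarith
  linarith
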